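/- (BTZ closed form for S.) Let β > 0 and k be real, let 0 < ν < 1, and define for each integer m ≥ 1 the BTZ quasinormal frequencies ω⁺_{m,1} = k − (2πi/β)(2m+ν−1), ω⁺_{m,2} = −k − (2πi/β)(2m+ν−1), ω⁻_{m,1} = k − (2πi/β)(2m−ν−1), ω⁻_{m,2} = −k − (2πi/β)(2m−ν−1). Then for every ω ∈ ℂ the infinite product over m ≥ 1 of (1 − ω/ω⁺_{m,1})·(1 − ω/ω⁺_{m,2})·(1 + ω/ω⁻_{m,1})·(1 + ω/ω⁻_{m,2}) converges (the family is multipliable) and equals (cos(πν − iβω/2) + cosh(βk/2))/(cos(πν) + cosh(βk/2)). -/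

import Mathlib

open Complex Filter Topology

/-- The `m`-th factor of the BTZ spectral product: poles at
`±k − (2πi/β)(2m+ν−1)` and zeros at `±k − (2πi/β)(2m−ν−1)`, for `m ≥ 1`
(indexed here by `m : ℕ` via `m+1`). -/
noncomputable def btzFactor (β k ν : ℝ) (ω : ℂ) (m : ℕ) : ℂ :=
  (1 - ω / ((k : ℂ) - (2 * (Real.pi : ℂ) * Complex.I / (β : ℂ)) * (2 * ((m : ℂ) + 1) + (ν : ℂ) - 1))) *
  (1 - ω / (-(k : ℂ) - (2 * (Real.pi : ℂ) * Complex.I / (β : ℂ)) * (2 * ((m : ℂ) + 1) + (ν : ℂ) - 1))) *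
  (1 + ω / ((k : ℂ) - (2 * (Real.pi : ℂ) * Complex.I / (β : ℂ)) * (2 * ((m : ℂ) + 1) - (ν : ℂ) - 1))) *
  (1 + ω / (-(k : ℂ) - (2 * (Real.pi : ℂ) * Complex.I / (β : ℂ)) * (2 * ((m : ℂ) + 1) - (ν : ℂ) - 1)))

/-!
In units of `2πi/β`, write `q` and `w` for `k` and `ω`, and `N = 2m - 1` for `m ≥ 1`. The four
frequencies become `-(N + ν ∓ q)` and `-(N - ν ∓ q)`, and the `m`-th factor splits, for `a = ν - q`
and `a = ν + q`, into pairs `(1 + w/(N + a)) (1 - w/(N - a)) = (1 - (a + w)²/N²) / (1 - a²/N²)`.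
Euler's product for the cosine evaluates each pair to `cos (π (a + w)/2) / cos (π a/2)`, and the
product-to-sum formula combines the two quotients.
-/

section EulerCosineProduct

/-- The numerators `2n + 1 ± x` on the right reassemble into the numerators of the sine product at
`(x + 1) / 2`; dividing by the case `x = 0` cancels the denominators, up to a boundary factor. -/
theorem sine_prod_range_eq_mul_cosine_prod_range {K : Type*} [Field K] [CharZero K] (x : K)
    (n : ℕ) :
    (x + 1) / 2 * ∏ j ∈ Finset.range n, (1 - ((x + 1) / 2) ^ 2 / ((j : K) + 1) ^ 2) =
      1 / 2 * (∏ j ∈ Finset.range n, (1 - (1 / 2) ^ 2 / ((j : K) + 1) ^ 2)) *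
        (1 + x / (2 * n + 1)) * ∏ j ∈ Finset.range n, (1 - x ^ 2 / (2 * (j : K) + 1) ^ 2) := by
  induction n with
  | zero =>
    simp only [Finset.range_zero, Finset.prod_empty, Nat.cast_zero]
    ring
  | succ n ih =>
    have succ_ne_zero : (n : K) + 1 ≠ 0 := n.cast_add_one_ne_zero
    have odd_ne_zero : 2 * (n : K) + 1 ≠ 0 := by exact_mod_cast (2 * n).succ_ne_zero
    have next_odd_ne_zero : 2 * (n + 1 : K) + 1 ≠ 0 := by
      exact_mod_cast (2 * (n + 1)).succ_ne_zero
    have factor_eq : (1 - ((x + 1) / 2) ^ 2 / ((n : K) + 1) ^ 2) * (1 + x / (2 * n + 1)) =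
        (1 - (1 / 2) ^ 2 / ((n : K) + 1) ^ 2) * (1 + x / (2 * (n + 1) + 1)) *
          (1 - x ^ 2 / (2 * (n : K) + 1) ^ 2) := by
      field_simp
      ring
    simp only [Finset.prod_range_succ, Nat.cast_succ]
    rw [← mul_assoc, ih]
    linear_combination (1 / 2 * (∏ j ∈ Finset.range n, (1 - (1 / 2) ^ 2 / ((j : K) + 1) ^ 2)) *
      ∏ j ∈ Finset.range n, (1 - x ^ 2 / (2 * (j : K) + 1) ^ 2)) * factor_eq

theorem multipliable_one_sub_sq_div_odd_sq (x : ℂ) :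
    Multipliable fun m : ℕ => 1 - x ^ 2 / (2 * (m : ℂ) + 1) ^ 2 := by
  have odd_injective : Function.Injective fun m : ℕ => 2 * m + 1 := fun a b h => by grind
  have summable_norm := (summable_pow_div_add (x ^ 2) 2 0 one_lt_two).comp_injective odd_injective
  simp only [sub_eq_add_neg]
  refine multipliable_one_add_of_summable (summable_norm.congr fun m => ?_)
  simp only [Function.comp_apply, norm_neg]
  push_cast
  rw [add_zero]

theorem tendsto_one_add_div_odd (x : ℂ) :
    Tendsto (fun n : ℕ => 1 + x / (2 * (n : ℂ) + 1)) atTop (𝓝 1) := by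
  have odd_atTop : Tendsto (fun n : ℕ => 2 * n + 1) atTop atTop :=
    tendsto_atTop_mono (fun n => show n ≤ 2 * n + 1 by lia) tendsto_id
  simpa [Function.comp_def] using
    ((tendsto_const_div_atTop_nhds_zero_nat x).comp odd_atTop).const_add 1

theorem hasProd_one_sub_sq_div_odd_sq (x : ℂ) :
    HasProd (fun m : ℕ => 1 - x ^ 2 / (2 * (m : ℂ) + 1) ^ 2) (cos (Real.pi * x / 2)) := by
  rw [(multipliable_one_sub_sq_div_odd_sq x).hasProd_iff_tendsto_nat]
  have sine_prod := tendsto_euler_sin_prod ((x + 1) / 2)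
  rw [show (Real.pi : ℂ) * ((x + 1) / 2) = Real.pi * x / 2 + Real.pi / 2 by ring,
    sin_add_pi_div_two] at sine_prod
  have correction := (tendsto_euler_sin_prod (1 / 2)).mul (tendsto_one_add_div_odd x)
  rw [mul_one_div, sin_pi_div_two, one_mul] at correction
  have quotient := sine_prod.div correction one_ne_zero
  rw [div_one] at quotient
  refine quotient.congr' ?_
  filter_upwards [correction.eventually_ne one_ne_zero] with n hn
  rw [Pi.div_apply, div_eq_iff hn]
  linear_combination (Real.pi : ℂ) * sine_prod_range_eq_mul_cosine_prod_range x n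

end EulerCosineProduct

section ShiftedProducts

theorem one_add_div_mul_one_sub_div {K : Type*} [Field K] {N a : K} (hN : N ≠ 0)
    (hadd : N + a ≠ 0) (hsub : N - a ≠ 0) (w : K) :
    (1 + w / (N + a)) * (1 - w / (N - a)) = (1 - (a + w) ^ 2 / N ^ 2) / (1 - a ^ 2 / N ^ 2) := by
  have denominator_eq : 1 - a ^ 2 / N ^ 2 = (N + a) * (N - a) / N ^ 2 := by
    field_simp
    ring
  rw [denominator_eq]
  field_simp
  ring

theorem odd_add_ne_zero_and_odd_sub_ne_zero {a : ℂ} (ha : cos (Real.pi * a / 2) ≠ 0) (m : ℕ) :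
    2 * (m : ℂ) + 1 + a ≠ 0 ∧ 2 * (m : ℂ) + 1 - a ≠ 0 := by
  constructor <;> intro h <;> refine ha (cos_eq_zero_iff.mpr ?_)
  · exact ⟨-(m + 1), by push_cast; linear_combination Real.pi / 2 * h⟩
  · exact ⟨m, by push_cast; linear_combination -Real.pi / 2 * h⟩

theorem hasProd_cos_div_cos {a : ℂ} (ha : cos (Real.pi * a / 2) ≠ 0) (w : ℂ) :
    HasProd (fun m : ℕ => (1 + w / (2 * (m : ℂ) + 1 + a)) * (1 - w / (2 * (m : ℂ) + 1 - a)))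
      (cos (Real.pi * (a + w) / 2) / cos (Real.pi * a / 2)) := by
  refine ((hasProd_one_sub_sq_div_odd_sq (a + w)).div₀
    (hasProd_one_sub_sq_div_odd_sq a) ha).congr_fun fun m => ?_
  have odd_ne_zero : 2 * (m : ℂ) + 1 ≠ 0 := by exact_mod_cast (2 * m).succ_ne_zero
  obtain ⟨add_ne_zero, sub_ne_zero⟩ := odd_add_ne_zero_and_odd_sub_ne_zero ha m
  exact one_add_div_mul_one_sub_div odd_ne_zero add_ne_zero sub_ne_zero w

theorem cos_pi_mul_sub_mul_cos_pi_mul_add (x y : ℂ) :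
    cos (Real.pi * (x - y) / 2) * cos (Real.pi * (x + y) / 2) =
      (cos (Real.pi * x) + cos (Real.pi * y)) / 2 := by
  rw [cos_add_cos]
  ring_nf

theorem hasProd_cos_add_cos_div_cos_add_cos {a q : ℂ}
    (h : cos (Real.pi * a) + cos (Real.pi * q) ≠ 0) (w : ℂ) :
    HasProd (fun m : ℕ =>
        (1 + w / (2 * (m : ℂ) + 1 + (a - q))) * (1 - w / (2 * (m : ℂ) + 1 - (a - q))) *
        ((1 + w / (2 * (m : ℂ) + 1 + (a + q))) * (1 - w / (2 * (m : ℂ) + 1 - (a + q)))))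
      ((cos (Real.pi * (a + w)) + cos (Real.pi * q)) /
        (cos (Real.pi * a) + cos (Real.pi * q))) := by
  have cos_mul_cos_ne_zero := div_ne_zero h two_ne_zero
  rw [← cos_pi_mul_sub_mul_cos_pi_mul_add] at cos_mul_cos_ne_zero
  have product := (hasProd_cos_div_cos (left_ne_zero_of_mul cos_mul_cos_ne_zero) w).mul
    (hasProd_cos_div_cos (right_ne_zero_of_mul cos_mul_cos_ne_zero) w)
  rwa [div_mul_div_comm, sub_add_eq_add_sub, add_right_comm, cos_pi_mul_sub_mul_cos_pi_mul_add,
    cos_pi_mul_sub_mul_cos_pi_mul_add, div_div_div_cancel_right₀ two_ne_zero] at product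

end ShiftedProducts

section QuasinormalFrequencies

/-- The thermal frequency unit `2πi/β` at inverse temperature `β`, `i` times the first bosonic
Matsubara frequency; consecutive quasinormal frequencies of a family differ by two units. -/
noncomputable def thermalUnit (β : ℂ) : ℂ := 2 * Real.pi * I / β

/-- The BTZ quasinormal frequency `ω⁺_{m+1,1}`, for complex parameters. The other three families
`ω⁺_{m+1,2}`, `ω⁻_{m+1,1}` and `ω⁻_{m+1,2}` are its values at `(-k, ν)`, `(k, -ν)` and
`(-k, -ν)`. -/
noncomputable def btzFrequency (β k ν : ℂ) (m : ℕ) : ℂ :=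
  k - thermalUnit β * (2 * (m + 1) + ν - 1)

theorem btzFactor_eq_mul_btzFrequency (β k ν : ℝ) (ω : ℂ) (m : ℕ) :
    btzFactor β k ν ω m =
      (1 - ω / btzFrequency β k ν m) * (1 - ω / btzFrequency β (-k) ν m) *
        (1 + ω / btzFrequency β k (-ν) m) * (1 + ω / btzFrequency β (-k) (-ν) m) := by
  simp only [btzFactor, btzFrequency, thermalUnit, sub_eq_add_neg]

theorem div_btzFrequency {β : ℂ} (hβ : β ≠ 0) (k ν ω : ℂ) (m : ℕ) :
    ω / btzFrequency β k ν m =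
      -(ω / thermalUnit β / (2 * m + 1 + (ν - k / thermalUnit β))) := by
  have unit_ne_zero : thermalUnit β ≠ 0 := div_ne_zero two_pi_I_ne_zero hβ
  have frequency_eq : btzFrequency β k ν m =
      -(thermalUnit β * (2 * m + 1 + (ν - k / thermalUnit β))) := by
    rw [btzFrequency]
    field_simp
    ring
  rw [frequency_eq, div_neg, div_mul_eq_div_div]

theorem pi_mul_div_thermalUnit (β z : ℂ) :
    Real.pi * (z / thermalUnit β) = -(β * z / 2 * I) := by
  have pi_ne_zero : (Real.pi : ℂ) ≠ 0 := ofReal_ne_zero.mpr Real.pi_ne_zero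
  rw [thermalUnit]
  field_simp
  rw [I_sq]
  ring

theorem cos_pi_mul_add_cosh_pos {ν : ℝ} (hν : 0 ≤ ν) (hν1 : ν < 1) (x : ℝ) :
    0 < Real.cos (Real.pi * ν) + Real.cosh x := by
  have neg_one_lt_cos : -1 < Real.cos (Real.pi * ν) := by
    rw [← Real.cos_pi]
    exact Real.cos_lt_cos_of_nonneg_of_le_pi (by positivity) le_rfl
      (mul_lt_of_lt_one_right Real.pi_pos hν1)
  linarith [Real.one_le_cosh x]

end QuasinormalFrequencies

theorem stmt_14_general {β k ν : ℂ} (hβ : β ≠ 0)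
    (h : cos (Real.pi * ν) + cosh (β * k / 2) ≠ 0) (ω : ℂ) :
    HasProd (fun m : ℕ =>
        (1 - ω / btzFrequency β k ν m) * (1 - ω / btzFrequency β (-k) ν m) *
        (1 + ω / btzFrequency β k (-ν) m) * (1 + ω / btzFrequency β (-k) (-ν) m))
      ((cos (Real.pi * ν - I * β * ω / 2) + cosh (β * k / 2)) /
        (cos (Real.pi * ν) + cosh (β * k / 2))) := by
  have cos_eq_cosh : cos (Real.pi * (k / thermalUnit β)) = cosh (β * k / 2) := by
    rw [pi_mul_div_thermalUnit, cos_neg, cos_mul_I]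
  have angle_eq : Real.pi * (ν + ω / thermalUnit β) = Real.pi * ν - I * β * ω / 2 := by
    rw [mul_add, pi_mul_div_thermalUnit]
    ring
  rw [← cos_eq_cosh] at h
  have product := hasProd_cos_add_cos_div_cos_add_cos h (ω / thermalUnit β)
  rw [cos_eq_cosh, angle_eq] at product
  refine product.congr_fun fun m => ?_
  have sub_sub_eq : 2 * (m : ℂ) + 1 - (ν - k / thermalUnit β) =
      2 * m + 1 + (-ν - -k / thermalUnit β) := by ring
  have sub_add_eq : 2 * (m : ℂ) + 1 - (ν + k / thermalUnit β) =
      2 * m + 1 + (-ν - k / thermalUnit β) := by ring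
  rw [sub_sub_eq, sub_add_eq]
  simp only [div_btzFrequency hβ, neg_div, sub_neg_eq_add]
  ring

/-- BTZ closed form: the infinite product over the quasinormal frequencies converges
and equals `(cos(πν − iβω/2) + cosh(βk/2)) / (cos(πν) + cosh(βk/2))`. -/
theorem stmt_14 (β k ν : ℝ) (hβ : 0 < β) (hν : 0 < ν) (hν1 : ν < 1) (ω : ℂ) :
    Multipliable (btzFactor β k ν ω) ∧
    (∏' m : ℕ, btzFactor β k ν ω m) =
      (Complex.cos ((Real.pi : ℂ) * (ν : ℂ) - Complex.I * (β : ℂ) * ω / 2) +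
          Complex.cosh ((β : ℂ) * (k : ℂ) / 2)) /
        (Complex.cos ((Real.pi : ℂ) * (ν : ℂ)) + Complex.cosh ((β : ℂ) * (k : ℂ) / 2)) := by
  have key := (stmt_14_general (k := k) (ofReal_ne_zero.mpr hβ.ne')
    (mod_cast (cos_pi_mul_add_cosh_pos hν.le hν1 (β * k / 2)).ne') ω).congr_fun
    (btzFactor_eq_mul_btzFrequency β k ν ω)
  exact ⟨key.multipliable, key.tprod_eq⟩
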